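/- Let R be a standard graded algebra over a field K, let d > 0 be a degree, let l_1,…,l_r be linear forms of R satisfying property (Gr,d), and let dim_K R_d = C(k_d,d) + C(k_{d−1},d−1) + … + C(k_1,1) be the d-th Macaulay representation of dim_K R_d. Then for every p with 1 ≤ p ≤ r one has dim_K (R/(l_1,…,l_p))_d ≤ C(k_d−p,d) + C(k_{d−1}−p,d−1) + … + C(k_1−p,1). -/

import Mathlib

/-- Polynomial functions on a `K`-vector space `V`: the subalgebra of `V → K`
generated by the linear functionals. -/
def polyFuns (K V : Type*) [Field K] [AddCommGroup V] [Module K V] : Subalgebra K (V → K) :=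
  Algebra.adjoin K {f : V → K | ∃ φ : V →ₗ[K] K, ⇑φ = f}

/-- A subset of (the affine space of) a `K`-vector space is Zariski closed if it is the
common zero locus of a family of polynomial functions. -/
def IsZClosed (K : Type*) {V : Type*} [Field K] [AddCommGroup V] [Module K V]
    (Z : Set V) : Prop :=
  ∃ S : Set (V → K), (∀ f ∈ S, f ∈ polyFuns K V) ∧ Z = {v | ∀ f ∈ S, f v = 0}

/-- A subset is Zariski open if its complement is Zariski closed. -/
def IsZOpen (K : Type*) {V : Type*} [Field K] [AddCommGroup V] [Module K V]
    (U : Set V) : Prop :=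
  IsZClosed K Uᶜ

/-- An irreducible variety: a nonempty Zariski closed set which is not the union of two
proper closed subsets. -/
def IsIrredVariety (K : Type*) {V : Type*} [Field K] [AddCommGroup V] [Module K V]
    (W : Set V) : Prop :=
  IsZClosed K W ∧ W.Nonempty ∧
    ∀ Z₁ Z₂ : Set V, IsZClosed K Z₁ → IsZClosed K Z₂ → W ⊆ Z₁ ∪ Z₂ → (W ⊆ Z₁ ∨ W ⊆ Z₂)

/-- Auxiliary recursion for `wordIdeal`: letters are booleans, `true` standing for the
letter `c` (colon) and `false` for the letter `s` (sum). The natural number argument keeps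
track of which linear form is to be used next (0-indexed). -/
def wordIdealAux {R : Type*} [CommRing R] (l : ℕ → R) : ℕ → Ideal R → List Bool → Ideal R
  | _, I, [] => I
  | j, I, a :: o =>
      wordIdealAux l (j + 1)
        (if a then I.colon (Ideal.span {l j}) else I ⊔ Ideal.span {l j}) o

/-- The ideal `I_{l,o}` attached to a sequence of (linear) forms `l` and a word `o` in the
letters `{c, s}` (here `c = true`, `s = false`): starting from `(0)`, the `j`-th letter
either colons (`c`) or adds (`s`) the `j`-th form. -/
def wordIdeal {R : Type*} [CommRing R] (l : ℕ → R) (o : List Bool) : Ideal R :=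
  wordIdealAux l 0 ⊥ o

/-- The degree `d` component `I ∩ R_d` of an ideal `I`, as a `K`-subspace of `𝒜 d`. -/
def homComp {K R : Type*} [Field K] [CommRing R] [Algebra K R]
    (𝒜 : ℕ → Submodule K R) (I : Ideal R) (d : ℕ) : Submodule K (𝒜 d) :=
  Submodule.comap (𝒜 d).subtype (Submodule.restrictScalars K I)

/-- `dim_K (I)_d`, the dimension of the degree `d` component of the (homogeneous) ideal `I`. -/
noncomputable def homDim {K R : Type*} [Field K] [CommRing R] [Algebra K R]
    (𝒜 : ℕ → Submodule K R) (I : Ideal R) (d : ℕ) : ℕ :=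
  Module.finrank K (homComp 𝒜 I d)

/-- `dim_K (R/I)_d`, the dimension of the degree `d` component of `R/I` for a
(homogeneous) ideal `I`, computed as `dim 𝒜 d / (I ∩ 𝒜 d)`. -/
noncomputable def quotDim {K R : Type*} [Field K] [CommRing R] [Algebra K R]
    (𝒜 : ℕ → Submodule K R) (I : Ideal R) (d : ℕ) : ℕ :=
  Module.finrank K ((𝒜 d) ⧸ homComp 𝒜 I d)

/-- `macaulayDown c d = c_⟨d⟩`: if `c = C(k_d,d) + … + C(k_1,1)` is the `d`-th Macaulay
representation of `c`, then `c_⟨d⟩ = C(k_d - 1,d) + … + C(k_1 - 1,1)`; computed greedily. -/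
def macaulayDown : ℕ → ℕ → ℕ
  | _, 0 => 0
  | c, d + 1 =>
      let k := Nat.findGreatest (fun k => Nat.choose k (d + 1) ≤ c) (c + d + 1)
      Nat.choose (k - 1) (d + 1) + macaulayDown (c - Nat.choose k (d + 1)) d

/-- Property (Gr,d) for the linear forms `l 0, …, l (r-1)` (letters: `true = c`,
`false = s`): for every word `o` of length `i ≤ r`,
(1) if `m ⊄ I_o` and `i < r` then `l_{i+1} ∉ I_o`;
(2) if `i = r` and `|o|_c < d` then `m ⊆ I_o`;
(3) if `i ≤ r - 2` then `dim (I_{o,c,s})_{d - |o|_c - 1} ≤ dim (I_{o,s,c})_{d - |o|_c - 1}`. -/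
def GrProp {K R : Type*} [Field K] [CommRing R] [Algebra K R]
    (𝒜 : ℕ → Submodule K R) [GradedAlgebra 𝒜] (l : ℕ → R) (r d : ℕ) : Prop :=
  ∀ o : List Bool, o.length ≤ r →
    (¬ (HomogeneousIdeal.irrelevant 𝒜).toIdeal ≤ wordIdeal l o → o.length < r →
        l o.length ∉ wordIdeal l o) ∧
    (o.length = r → o.count true < d →
        (HomogeneousIdeal.irrelevant 𝒜).toIdeal ≤ wordIdeal l o) ∧
    (o.length + 2 ≤ r →
        homDim 𝒜 (wordIdeal l (o ++ [true, false])) (d - o.count true - 1) ≤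
          homDim 𝒜 (wordIdeal l (o ++ [false, true])) (d - o.count true - 1))


/-- `TT p q d = ∑_{i<d} C(q_i - p, i+1)`. -/
def TT (p : ℕ) (q : ℕ → ℕ) (d : ℕ) : ℕ := ∑ i ∈ Finset.range d, (q i - p).choose (i + 1)

/-- strict monotonicity on `[0,d)`. -/
def SM (q : ℕ → ℕ) (d : ℕ) : Prop := ∀ i, i + 1 < d → q i < q (i + 1)

lemma TT_succ (p q d) : TT p q (d + 1) = TT p q d + (q d - p).choose (d + 1) := by
  simp [TT, Finset.sum_range_succ]

lemma SM.pred {q d} (h : SM q (d + 1)) : SM q d := fun i hi => h i (by omega)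

lemma TT0_lt {q : ℕ → ℕ} : ∀ d, SM q (d + 1) → TT 0 q (d + 1) < (q d + 1).choose (d + 1)
  | 0, _ => by simp [TT]
  | d + 1, h => by
    rw [TT_succ]
    have := TT0_lt d h.pred
    have h2 : (q d + 1).choose (d + 1) ≤ (q (d + 1)).choose (d + 1) :=
      Nat.choose_le_choose _ (h d (by omega))
    have h3 := Nat.choose_succ_succ (q (d + 1)) (d + 1)
    simp only [Nat.succ_eq_add_one, Nat.sub_zero] at *
    omega

lemma TT_small (p : ℕ) {q : ℕ → ℕ} : ∀ d, SM q (d + 1) → q d ≤ d → TT p q (d + 1) = 0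
  | 0, _, h => by simp [TT]; omega
  | d + 1, h, h' => by
    have h2 := h d (by omega)
    rw [TT_succ, TT_small p d h.pred (by omega), Nat.choose_eq_zero_of_lt (by omega)]

lemma TT1_lt {q : ℕ → ℕ} : ∀ d, SM q (d + 1) → d + 1 ≤ q d →
    TT 1 q (d + 1) < (q d).choose (d + 1)
  | 0, _, h => by simp [TT]; omega
  | d + 1, h, h' => by
    rw [TT_succ]
    have h2 := h d (by omega)
    obtain ⟨m, hm⟩ : ∃ m, q (d + 1) = m + 1 := ⟨q (d + 1) - 1, by omega⟩
    have h3 := Nat.choose_succ_succ m (d + 1)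
    have h4 : TT 1 q (d + 1) < m.choose (d + 1) := by
      by_cases h5 : d + 1 ≤ q d
      · exact (TT1_lt d h.pred h5).trans_le (Nat.choose_le_choose _ (by omega))
      · rw [TT_small 1 d h.pred (by omega)]
        exact Nat.choose_pos (by omega)
    rw [hm]
    simp only [Nat.succ_eq_add_one, Nat.add_sub_cancel] at *
    omega

lemma TT_mono {q q' : ℕ → ℕ} : ∀ d, SM q d → SM q' d → TT 0 q d ≤ TT 0 q' d →
    TT 1 q d ≤ TT 1 q' d
  | 0, _, _, _ => by simp [TT]
  | d + 1, h, h', hle => by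
    rcases lt_trichotomy (q d) (q' d) with hlt | heq | hgt
    · by_cases h5 : d + 1 ≤ q d
      · refine (TT1_lt d h h5).le.trans ?_
        rw [TT_succ]
        exact (Nat.choose_le_choose _ (by omega)).trans (Nat.le_add_left _ _)
      · rw [TT_small 1 d h (by omega)]
        exact Nat.zero_le _
    · rw [TT_succ, TT_succ, heq] at hle ⊢
      have := TT_mono d h.pred h'.pred (by omega)
      omega
    · have h1 := TT0_lt d h'
      have h2 : (q' d + 1).choose (d + 1) ≤ (q d).choose (d + 1) := Nat.choose_le_choose _ hgt
      rw [TT_succ 0 q] at hle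
      simp only [Nat.sub_zero] at hle
      omega

lemma TT_reflect {q q' : ℕ → ℕ} : ∀ d, SM q d → SM q' d → (∀ i < d, q i ≠ i + 1) →
    TT 1 q d ≤ TT 1 q' d → TT 0 q d ≤ TT 0 q' d
  | 0, _, _, _, _ => by simp [TT]
  | d + 1, h, h', hne, hle => by
    rcases lt_trichotomy (q d) (q' d) with hlt | heq | hgt
    · refine (TT0_lt d h).le.trans ?_
      rw [TT_succ]
      exact (Nat.choose_le_choose _ (by omega)).trans (Nat.le_add_left _ _)
    · rw [TT_succ, TT_succ, heq] at hle ⊢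
      have := TT_reflect d h.pred h'.pred (fun i hi => hne i (by omega)) (by omega)
      omega
    · have h0 := hne d (by omega)
      by_cases h5 : q d ≤ d
      · rw [TT_small 0 d h h5]
        exact Nat.zero_le _
      · exfalso
        have hpos : 0 < (q d - 1).choose (d + 1) := Nat.choose_pos (by omega)
        rw [TT_succ 1 q] at hle
        by_cases h6 : d + 1 ≤ q' d
        · have h7 := TT1_lt d h' h6
          have h8 : (q' d).choose (d + 1) ≤ (q d - 1).choose (d + 1) :=
            Nat.choose_le_choose _ (by omega)
          omega
        · rw [TT_small 1 d h' (by omega)] at hle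
          omega

lemma TT_congr {p p' : ℕ} {q q' : ℕ → ℕ} (d : ℕ)
    (h : ∀ i < d, (q i - p).choose (i + 1) = (q' i - p').choose (i + 1)) :
    TT p q d = TT p' q' d :=
  Finset.sum_congr rfl fun i hi => h i (Finset.mem_range.1 hi)

lemma exists_rep : ∀ d c, ∃ q, SM q (d + 1) ∧ TT 0 q (d + 1) = c
  | 0, c => ⟨fun _ => c, fun i hi => by omega, by simp [TT]⟩
  | d + 1, c => by
    have hb : ∀ k, k.choose (d + 2) ≤ c → k ≤ c + (d + 2) := by
      intro k hk
      by_contra hcon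
      have h1 : (c + (d + 2)).choose (d + 2) < k.choose (d + 2) := by
        have h2 : (c + (d + 2) + 1).choose (d + 2) ≤ k.choose (d + 2) :=
          Nat.choose_le_choose _ (by omega)
        have h3 : (c + (d + 2) + 1).choose (d + 2) = (c + (d + 2)).choose (d + 1) + (c + (d + 2)).choose (d + 2) :=
          Nat.choose_succ_succ (c + (d + 2)) (d + 1)
        have h4 : 0 < (c + (d + 2)).choose (d + 1) := Nat.choose_pos (by omega)
        omega
      have h5 : ∀ m n : ℕ, n + 1 ≤ (n + (m + 1)).choose (m + 1) := by
        intro m n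
        induction n with
        | zero => simp
        | succ n ih =>
          have h3 := Nat.choose_succ_succ (n + (m + 1)) m
          have h4 : 0 < (n + (m + 1)).choose m := Nat.choose_pos (by omega)
          rw [show n + 1 + (m + 1) = (n + (m + 1)) + 1 by omega]
          simp only [Nat.succ_eq_add_one] at *
          omega
      have : c + 1 ≤ (c + (d + 2)).choose (d + 2) := h5 (d + 1) c
      omega
    set k := Nat.findGreatest (fun k => k.choose (d + 2) ≤ c) (c + (d + 2)) with hk
    have hk1 : k.choose (d + 2) ≤ c :=
      Nat.findGreatest_spec (P := fun k => k.choose (d + 2) ≤ c) (Nat.zero_le _) (by simp)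
    have hk2 : c < (k + 1).choose (d + 2) := by
      by_contra hcon
      have h1 := hb (k + 1) (by omega)
      have := Nat.le_findGreatest (P := fun k => k.choose (d + 2) ≤ c) h1 (by omega)
      omega
    obtain ⟨q, hq, hqc⟩ := exists_rep d (c - k.choose (d + 2))
    have h3 : (k + 1).choose (d + 2) = k.choose (d + 1) + k.choose (d + 2) :=
      Nat.choose_succ_succ k (d + 1)
    have hqk : q d < k := by
      by_contra hcon
      have h4 : k.choose (d + 1) ≤ (q d).choose (d + 1) := Nat.choose_le_choose _ (by omega)
      rw [TT_succ] at hqc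
      simp only [Nat.sub_zero] at *
      omega
    refine ⟨fun i => if i ≤ d then q i else k, ?_, ?_⟩
    · intro i hi
      by_cases h : i + 1 ≤ d
      · have := hq i (by omega)
        simp [h, show i ≤ d by omega, this]
      · obtain rfl : i = d := by omega
        simpa using hqk
    · rw [TT_succ, TT_congr (p' := 0) (q' := q) (d + 1), hqc]
      · simp [show d + 1 + 1 = d + 2 from rfl]; omega
      · intro i hi
        simp [show i ≤ d by omega]

lemma num_main (n a b : ℕ) (qa qb qc : ℕ → ℕ) (ha : SM qa (n + 2)) (hb : SM qb (n + 1))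
    (hc : SM qc (n + 2)) (ea : TT 0 qa (n + 2) = a) (eb : TT 0 qb (n + 1) = b)
    (ec : TT 0 qc (n + 2) = a + b) (hle : a ≤ TT 1 qa (n + 2) + TT 1 qb (n + 1)) :
    a ≤ TT 1 qc (n + 2) := by
  set q' : ℕ → ℕ := fun j => if j + 1 < qa (j + 1) then qa (j + 1) else j with hq'
  set Q : ℕ → ℕ := fun i => if i + 1 ≤ qa i then qa i + 1 else i with hQ
  have sq' : SM q' (n + 1) := by
    intro i hi
    have := ha (i + 1) (by omega)
    simp only [hq']
    split_ifs <;> omega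
  have sQ : SM Q (n + 2) := by
    intro i hi
    have := ha i (by omega)
    simp only [hQ]
    split_ifs <;> omega
  have key : ∀ p, (p = 0 ∨ p = 1) → ∀ i, (Q (i + 1) - p).choose (i + 2) =
      (qa (i + 1) - p).choose (i + 2) + (q' i - p).choose (i + 1) := by
    intro p hp i
    simp only [hQ, hq']
    by_cases h : i + 1 < qa (i + 1)
    · rw [if_pos h, if_pos (by omega)]
      obtain ⟨m, hm⟩ : ∃ m, qa (i + 1) - p = m := ⟨_, rfl⟩
      have h3 : (m + 1).choose (i + 2) = m.choose (i + 1) + m.choose (i + 2) :=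
        Nat.choose_succ_succ m (i + 1)
      rw [show qa (i + 1) + 1 - p = m + 1 by omega, hm, h3, Nat.add_comm]
    · rw [if_neg h, if_neg (by omega), Nat.choose_eq_zero_of_lt, Nat.choose_eq_zero_of_lt,
        Nat.choose_eq_zero_of_lt] <;> omega
  have split : ∀ p (q : ℕ → ℕ), TT p q (n + 2) =
      ∑ i ∈ Finset.range (n + 1), (q (i + 1) - p).choose (i + 2) + (q 0 - p) := by
    intro p q
    rw [TT, Finset.sum_range_succ']
    simp
  have hsum : ∀ p, (p = 0 ∨ p = 1) → TT p Q (n + 2) + (qa 0 - p) =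
      TT p qa (n + 2) + TT p q' (n + 1) + (Q 0 - p) := by
    intro p hp
    rw [split, split, Finset.sum_congr rfl (fun i _ => key p hp i), Finset.sum_add_distrib, TT]
    omega
  have hQ1 : TT 1 Q (n + 2) = a := by
    rw [← ea]
    apply TT_congr
    intro i hi
    simp only [hQ]
    split_ifs with h
    · simp
    · rw [Nat.choose_eq_zero_of_lt, Nat.choose_eq_zero_of_lt] <;> omega
  have s0 := hsum 0 (Or.inl rfl)
  have s1 := hsum 1 (Or.inr rfl)
  have hQ0 : Q 0 = if 1 ≤ qa 0 then qa 0 + 1 else 0 := rfl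
  rw [← hQ1]
  apply TT_mono _ sQ hc
  by_cases h : 1 ≤ qa 0
  · rw [if_pos h] at hQ0
    have h1 : TT 0 q' (n + 1) < TT 0 qb (n + 1) := by
      by_contra hcon
      have := TT_mono _ hb sq' (by omega)
      omega
    omega
  · rw [if_neg h] at hQ0
    have h1 : TT 0 q' (n + 1) ≤ TT 0 qb (n + 1) := by
      apply TT_reflect _ sq' hb
      · intro i hi
        simp only [hq']
        split_ifs <;> omega
      · omega
    omega

lemma wordIdealAux_append {R : Type*} [CommRing R] (l : ℕ → R) (o o' : List Bool) :
    ∀ (j : ℕ) (I : Ideal R), wordIdealAux l j I (o ++ o') =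
      wordIdealAux l (j + o.length) (wordIdealAux l j I o) o' := by
  induction o with
  | nil => intro j I; simp [wordIdealAux]
  | cons a o ih =>
    intro j I
    simp only [List.cons_append, wordIdealAux, ih, List.length_cons]
    rw [show j + 1 + o.length = j + (o.length + 1) by omega]

lemma wordIdeal_c {R : Type*} [CommRing R] (l : ℕ → R) (o : List Bool) :
    wordIdeal l (o ++ [true]) = (wordIdeal l o).colon (Ideal.span {l o.length}) := by
  simp [wordIdeal, wordIdealAux_append, wordIdealAux]

lemma wordIdeal_s {R : Type*} [CommRing R] (l : ℕ → R) (o : List Bool) :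
    wordIdeal l (o ++ [false]) = wordIdeal l o ⊔ Ideal.span {l o.length} := by
  simp [wordIdeal, wordIdealAux_append, wordIdealAux]

lemma wordIdeal_rep {R : Type*} [CommRing R] (l : ℕ → R) (p : ℕ) :
    wordIdeal l (List.replicate p false) = Ideal.span (l '' Set.Iio p) := by
  induction p with
  | zero => simp [wordIdeal, wordIdealAux]
  | succ p ih =>
    rw [List.replicate_succ', wordIdeal_s, ih, List.length_replicate, ← Ideal.span_union]
    congr 1
    ext x
    simp only [Set.mem_union, Set.mem_image, Set.mem_Iio, Set.mem_singleton_iff]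
    constructor
    · rintro (⟨i, hi, rfl⟩ | rfl)
      · exact ⟨i, by omega, rfl⟩
      · exact ⟨p, by omega, rfl⟩
    · rintro ⟨i, hi, rfl⟩
      rcases Nat.lt_succ_iff_lt_or_eq.1 hi with h | rfl
      · exact Or.inl ⟨i, h, rfl⟩
      · exact Or.inr rfl

section alg
variable {K R : Type*} [Field K] [CommRing R] [Algebra K R]
    (𝒜 : ℕ → Submodule K R)

lemma mem_homComp {I : Ideal R} {e : ℕ} {x : 𝒜 e} : x ∈ homComp 𝒜 I e ↔ (x : R) ∈ I := Iff.rfl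

lemma fd_all (h0 : 𝒜 0 = (1 : Submodule K R)) (hstd : ∀ n, 𝒜 (n + 1) = 𝒜 1 * 𝒜 n)
    [FiniteDimensional K (𝒜 1)] (n : ℕ) : FiniteDimensional K (𝒜 n) := by
  rw [← Submodule.fg_iff_finiteDimensional]
  induction n with
  | zero =>
    rw [h0, Submodule.one_eq_span]
    exact Submodule.fg_span_singleton 1
  | succ n ih =>
    rw [hstd]
    exact Submodule.FG.mul ((Submodule.fg_iff_finiteDimensional _).2 inferInstance) ih

variable [GradedAlgebra 𝒜]

lemma hom_colon {I : Ideal R} (hI : I.IsHomogeneous 𝒜) {x : R} (hx : x ∈ 𝒜 1) :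
    Ideal.IsHomogeneous 𝒜 (I.colon (Ideal.span {x})) := by
  intro i r hr
  rw [Ideal.mem_colon_span_singleton] at hr ⊢
  have := hI (i + 1) hr
  rwa [DirectSum.coe_decompose_mul_add_of_right_mem 𝒜 hx] at this

lemma hom_sup {I : Ideal R} (hI : I.IsHomogeneous 𝒜) {x : R} (hx : x ∈ 𝒜 1) :
    Ideal.IsHomogeneous 𝒜 (I ⊔ Ideal.span {x}) := by
  apply Ideal.IsHomogeneous.sup hI
  apply Ideal.homogeneous_span
  rintro y rfl
  exact ⟨1, hx⟩

lemma hom_word (l : ℕ → R) (r : ℕ) (hl : ∀ j < r, l j ∈ 𝒜 1) (o : List Bool) :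
    o.length ≤ r → (wordIdeal l o).IsHomogeneous 𝒜 := by
  induction o using List.reverseRecOn with
  | nil => intro _; exact Ideal.IsHomogeneous.bot 𝒜
  | append_singleton o a ih =>
    intro h
    rw [List.length_append, List.length_singleton] at h
    cases a
    · rw [wordIdeal_s]
      exact hom_sup 𝒜 (ih (by omega)) (hl _ (by omega))
    · rw [wordIdeal_c]
      exact hom_colon 𝒜 (ih (by omega)) (hl _ (by omega))

lemma quot_exact (hfd : ∀ n, FiniteDimensional K (𝒜 n)) {I : Ideal R} (hI : I.IsHomogeneous 𝒜)
    {x : R} (hx : x ∈ 𝒜 1) (e : ℕ) :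
    quotDim 𝒜 I (e + 1) = quotDim 𝒜 (I.colon (Ideal.span {x})) e +
      quotDim 𝒜 (I ⊔ Ideal.span {x}) (e + 1) := by
  have := hfd (e + 1)
  have := hfd e
  let m : 𝒜 e →ₗ[K] 𝒜 (e + 1) :=
    { toFun := fun y => ⟨y * x, SetLike.mul_mem_graded y.2 hx⟩
      map_add' := fun y z => by ext; simp [add_mul]
      map_smul' := fun c y => by ext; simp }
  have hm : ∀ y, (m y : R) = y * x := fun y => rfl
  let f : 𝒜 e →ₗ[K] (𝒜 (e + 1) ⧸ homComp 𝒜 I (e + 1)) := (homComp 𝒜 I (e + 1)).mkQ ∘ₗ m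
  have hker : LinearMap.ker f = homComp 𝒜 (I.colon (Ideal.span {x})) e := by
    ext y
    rw [LinearMap.mem_ker, LinearMap.comp_apply, Submodule.mkQ_apply, Submodule.Quotient.mk_eq_zero,
      mem_homComp, mem_homComp, hm, Ideal.mem_colon_span_singleton]
  have hle : homComp 𝒜 I (e + 1) ≤ homComp 𝒜 (I ⊔ Ideal.span {x}) (e + 1) :=
    fun y hy => (le_sup_left : I ≤ _) hy
  let g := Submodule.factor hle
  have hrange : LinearMap.range f = LinearMap.ker g := by
    ext z
    obtain ⟨z, rfl⟩ := Submodule.Quotient.mk_surjective _ z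
    have h1 : g (Submodule.Quotient.mk z) = Submodule.Quotient.mk z := rfl
    rw [LinearMap.mem_ker, h1, Submodule.Quotient.mk_eq_zero, mem_homComp, sup_comm,
      Ideal.mem_span_singleton_sup]
    constructor
    · rintro ⟨y, hy⟩
      have h2 : (Submodule.Quotient.mk (m y) : 𝒜 (e + 1) ⧸ homComp 𝒜 I (e + 1)) =
        Submodule.Quotient.mk z := hy
      rw [Submodule.Quotient.eq, mem_homComp] at h2
      refine ⟨y, -(((m y - z : 𝒜 (e + 1))) : R), I.neg_mem h2, ?_⟩
      simp [hm]
    · rintro ⟨a, b, hb, hab⟩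
      refine ⟨DirectSum.decompose 𝒜 a e, ?_⟩
      change (Submodule.Quotient.mk (m _) : 𝒜 (e + 1) ⧸ homComp 𝒜 I (e + 1)) =
        Submodule.Quotient.mk z
      rw [Submodule.Quotient.eq, mem_homComp]
      have h3 := hI (e + 1) hb
      have h4 : b = z - a * x := by rw [← hab]; ring
      rw [h4, DirectSum.decompose_sub, DirectSum.sub_apply, Submodule.coe_sub,
        DirectSum.coe_decompose_mul_add_of_right_mem 𝒜 hx,
        DirectSum.decompose_of_mem_same 𝒜 z.2] at h3
      have := I.neg_mem h3
      simpa [hm] using this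
  have hsurj : LinearMap.range g = ⊤ := by
    rw [LinearMap.range_eq_top]
    exact Submodule.factor_surjective hle
  have e1 := LinearMap.finrank_range_add_finrank_ker g
  rw [hsurj, finrank_top, ← hrange, ← (LinearMap.quotKerEquivRange f).finrank_eq, hker] at e1
  unfold quotDim
  omega

lemma quot_zero {I : Ideal R} (hI : (HomogeneousIdeal.irrelevant 𝒜).toIdeal ≤ I) (e : ℕ) :
    quotDim 𝒜 I (e + 1) = 0 := by
  have h : homComp 𝒜 I (e + 1) = ⊤ := by
    rw [eq_top_iff]
    rintro ⟨x, hx⟩ -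
    apply hI
    change x ∈ HomogeneousIdeal.irrelevant 𝒜
    rw [HomogeneousIdeal.mem_irrelevant_iff, GradedRing.proj_apply,
      DirectSum.decompose_of_mem_ne 𝒜 hx (by omega)]
  have := Submodule.Quotient.subsingleton_iff.2 h
  exact Module.finrank_zero_of_subsingleton

lemma quot_pos (hfd : ∀ n, FiniteDimensional K (𝒜 n)) {I : Ideal R} {x : R} (hx : x ∉ I) :
    0 < quotDim 𝒜 (I.colon (Ideal.span {x})) 0 := by
  have := hfd 0
  unfold quotDim
  rw [Module.finrank_pos_iff, Submodule.Quotient.nontrivial_iff]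
  intro h
  have h1 : (⟨1, SetLike.GradedOne.one_mem⟩ : 𝒜 0) ∈ homComp 𝒜 (I.colon (Ideal.span {x})) 0 := by
    rw [h]; trivial
  rw [mem_homComp, Ideal.mem_colon_span_singleton, one_mul] at h1
  exact hx h1

lemma green (hfd : ∀ n, FiniteDimensional K (𝒜 n)) (d r : ℕ)
    (l : ℕ → R) (hl : ∀ j < r, l j ∈ 𝒜 1) (hGr : GrProp 𝒜 l r d) :
    ∀ (t : ℕ) (o : List Bool) (e : ℕ), o.length + t + 1 = r → o.count true + (e + 1) = d →
      ∀ q, SM q (e + 1) → TT 0 q (e + 1) = quotDim 𝒜 (wordIdeal l o) (e + 1) →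
        quotDim 𝒜 (wordIdeal l (o ++ [false])) (e + 1) ≤ TT 1 q (e + 1) := by
  intro t
  induction t with
  | zero =>
    intro o e hr he q hq hqe
    rw [quot_zero 𝒜]
    · exact Nat.zero_le _
    · exact (hGr (o ++ [false]) (by simp; omega)).2.1 (by simp; omega) (by simp; omega)
  | succ t ih =>
    intro o e hr he q hq hqe
    have hx := hl o.length (by omega)
    have hx1 := hl (o.length + 1) (by omega)
    have ex := quot_exact 𝒜 hfd (hom_word 𝒜 l r hl o (by omega)) hx e
    rw [← wordIdeal_s, ← wordIdeal_c] at ex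
    cases e with
    | zero =>
      simp only [TT, zero_add, Finset.range_one, Finset.sum_singleton, Nat.choose_one_right] at *
      by_cases hm : (HomogeneousIdeal.irrelevant 𝒜).toIdeal ≤ wordIdeal l o
      · have := quot_zero 𝒜 hm 0
        simp only [zero_add] at this
        omega
      · have h1 := (hGr o (by omega)).1 hm (by omega)
        have h2 := quot_pos 𝒜 hfd h1
        rw [← wordIdeal_c] at h2
        omega
    | succ n =>
      obtain ⟨qa, ha, ea⟩ := exists_rep (n + 1) (quotDim 𝒜 (wordIdeal l (o ++ [false])) (n + 1 + 1))
      obtain ⟨qb, hb, eb⟩ := exists_rep n (quotDim 𝒜 (wordIdeal l (o ++ [true])) (n + 1))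
      have ia := ih (o ++ [false]) (n + 1) (by simp; omega) (by simp; omega) qa ha ea
      have ib := ih (o ++ [true]) n (by simp; omega) (by simp; omega) qb hb eb
      have ex2 := quot_exact 𝒜 hfd (hom_word 𝒜 l r hl (o ++ [false]) (by simp; omega))
        (x := l (o ++ [false]).length) (by simpa using hx1) (n + 1)
      rw [← wordIdeal_s, ← wordIdeal_c] at ex2
      have h3 := (hGr o (by omega)).2.2 (by omega)
      rw [show d - o.count true - 1 = n + 1 by omega] at h3
      have d1 : ∀ I, quotDim 𝒜 I (n + 1) + homDim 𝒜 I (n + 1) = Module.finrank K (𝒜 (n + 1)) := by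
        intro I
        have := hfd (n + 1)
        exact Submodule.finrank_quotient_add_finrank _
      have d2 := d1 (wordIdeal l (o ++ [true, false]))
      have d3 := d1 (wordIdeal l (o ++ [false, true]))
      simp only [List.append_assoc, List.cons_append, List.nil_append] at ia ib ex2
      refine num_main n _ (quotDim 𝒜 (wordIdeal l (o ++ [true])) (n + 1)) qa qb q ha hb hq ea eb
        ?_ ?_
      · rw [show n + 2 = n + 1 + 1 from rfl, hqe, ex, add_comm]
      · have ia' : _ ≤ TT 1 qa (n + 2) := ia
        change quotDim 𝒜 (wordIdeal l (o ++ [false])) (n + 1 + 1) ≤ _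
        omega

end alg

/-- **Corollary of the hyperplane restriction theorem.**  If the linear forms
`l 0, …, l (r-1)` of a standard graded algebra `R` satisfy property (Gr,d), and
`dim_K R_d = C(k_d,d) + C(k_{d-1},d-1) + … + C(k_1,1)` is the `d`-th Macaulay
representation of `dim_K R_d`, then for every `1 ≤ p ≤ r`,
`dim_K (R/(l_1,…,l_p))_d ≤ C(k_d - p,d) + … + C(k_1 - p,1)`. -/
theorem corollary_hyperplane_restriction
    {K R : Type*} [Field K] [CommRing R] [Algebra K R]
    (𝒜 : ℕ → Submodule K R) [GradedAlgebra 𝒜]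
    (h0 : 𝒜 0 = (1 : Submodule K R)) (hstd : ∀ n, 𝒜 (n + 1) = 𝒜 1 * 𝒜 n)
    [FiniteDimensional K (𝒜 1)] (d r : ℕ) (hd : 0 < d)
    (l : ℕ → R) (hl : ∀ j < r, l j ∈ 𝒜 1)
    (hGr : GrProp 𝒜 l r d)
    (k : ℕ → ℕ) (hk : ∀ i j, 1 ≤ i → i < j → j ≤ d → k i < k j)
    (hrep : Module.finrank K (𝒜 d) = ∑ i ∈ Finset.Icc 1 d, (k i).choose i) :
    ∀ p : ℕ, 1 ≤ p → p ≤ r →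
      quotDim 𝒜 (Ideal.span (l '' Set.Iio p)) d ≤
        ∑ i ∈ Finset.Icc 1 d, (k i - p).choose i := by
  have hfd := fd_all 𝒜 h0 hstd
  have hIcc : ∀ p, ∑ i ∈ Finset.Icc 1 d, (k i - p).choose i = TT p (fun i => k (i + 1)) d := by
    intro p
    rw [TT, Finset.range_eq_Ico, Finset.sum_Ico_add' (fun i => (k i - p).choose i) 0 d 1]
    rfl
  have hS : SM (fun i => k (i + 1)) d := fun i hi => hk _ _ (by omega) (by omega) (by omega)
  obtain ⟨e, rfl⟩ : ∃ e, d = e + 1 := ⟨d - 1, by omega⟩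
  suffices H : ∀ p, p ≤ r → quotDim 𝒜 (wordIdeal l (List.replicate p false)) (e + 1) ≤
      TT p (fun i => k (i + 1)) (e + 1) by
    intro p _ hp
    rw [hIcc, ← wordIdeal_rep]
    exact H p hp
  intro p
  induction p with
  | zero =>
    intro _
    have := hfd (e + 1)
    rw [← hIcc]
    refine le_trans (Submodule.finrank_quotient_le _) ?_
    rw [hrep]
    simp
  | succ p ih =>
    intro hp
    obtain ⟨q, hq, eq⟩ := exists_rep e (quotDim 𝒜 (wordIdeal l (List.replicate p false)) (e + 1))
    have h1 := green 𝒜 hfd (e + 1) r l hl hGr (r - p - 1) (List.replicate p false) e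
      (by simp; omega) (by simp [List.count_replicate]) q hq eq
    rw [← List.replicate_succ'] at h1
    refine h1.trans ?_
    have h2 := ih (by omega)
    let q' : ℕ → ℕ := fun i => if i + 1 ≤ k (i + 1) - p then k (i + 1) - p else i
    have sq' : SM q' (e + 1) := by
      intro i hi
      have : k (i + 1) < k (i + 1 + 1) := hS i hi
      simp only [q']
      split_ifs <;> omega
    have t0 : TT 0 q' (e + 1) = TT p (fun i => k (i + 1)) (e + 1) := by
      apply TT_congr
      intro i hi
      simp only [q']
      split_ifs
      · rfl
      · rw [Nat.choose_eq_zero_of_lt, Nat.choose_eq_zero_of_lt] <;> omega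
    have t1 : TT 1 q' (e + 1) = TT (p + 1) (fun i => k (i + 1)) (e + 1) := by
      apply TT_congr
      intro i hi
      simp only [q']
      split_ifs
      · rw [Nat.sub_sub]
      · rw [Nat.choose_eq_zero_of_lt, Nat.choose_eq_zero_of_lt] <;> omega
    rw [← t1]
    apply TT_mono _ hq sq'
    omega
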